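/- Let q be a prime and let c, d₁, d₂ be integers coprime to q, with c⁻¹ an integer inverse of c modulo q. Then one has the exact identity ∑_{α = 0}^{q−1} e_q(αc)·S(1, αd₁; q)·S(1, αd₂; q) = q·e_q(−c⁻¹(d₁ + d₂))·S(c⁻¹d₁, c⁻¹d₂; q) − q. -/

import Mathlib

open Finset

/-- `e_q(x) = exp(2πi x / q)`. -/
noncomputable def expq (q : ℕ) (x : ℤ) : ℂ :=
  Complex.exp (2 * Real.pi * Complex.I * x / q)

/-- The Kloosterman sum `S(a, b; q) = ∑_{x ∈ (ℤ/qℤ)ˣ} e_q(a x + b x⁻¹)`. -/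
noncomputable def kloos (a b : ℤ) (q : ℕ) [NeZero q] : ℂ :=
  ∑ x : (ZMod q)ˣ,
    expq q (a * ((x : ZMod q).val : ℤ) + b * ((((x⁻¹ : (ZMod q)ˣ) : ZMod q)).val : ℤ))

/-!
Expand the two Kloosterman sums and sum over `α` first. After rescaling by units, orthogonality of
characters leaves the pairs of units `(s, t)` with `1 + s⁻¹ + t⁻¹ = 0`. This equation is equivalent
to `(1 + s) * (1 + t) = 1`, so `s = v - 1` and `t = v⁻¹ - 1` for a unit `v` such that `v - 1` is a
unit too. In a field only `v = 1` is excluded, and its term is what is subtracted from the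
Kloosterman sum over `v`.
-/

/-- The Kloosterman sum `K_ψ(a, b) = ∑ x, ψ (a x + b x⁻¹)` over the units of a ring with finitely
many units, for an arbitrary additive character `ψ`. For the standard character of `ℤ/qℤ` it
is `kloos`. -/
def kloostermanSum {R R' : Type*} [Semiring R] [Fintype Rˣ] [Semiring R']
    (ψ : AddChar R R') (a b : R) : R' :=
  ∑ x : Rˣ, ψ (a * x + b * ↑x⁻¹)

section CommRing

variable {R : Type*} [CommRing R]

lemma kloostermanSum_units_mul_right [Fintype Rˣ] {R' : Type*} [Semiring R'] (ψ : AddChar R R')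
    (a b : R) (u : Rˣ) : kloostermanSum ψ a (u * b) = kloostermanSum ψ (u * a) b := by
  refine (Fintype.sum_equiv (Equiv.mulLeft u) _ _ fun x ↦ congrArg ψ ?_).symm
  simp only [Equiv.coe_mulLeft, Units.val_mul, mul_inv]
  linear_combination (-b * ↑x⁻¹) * u.mul_inv

lemma one_add_inv_add_inv_eq_zero_iff (s t : Rˣ) :
    (1 + ↑s⁻¹ + ↑t⁻¹ : R) = 0 ↔ (1 + s : R) * (1 + t) = 1 := by
  have h : (1 + s : R) * (1 + t) - 1 = (s * t : Rˣ) * (1 + ↑s⁻¹ + ↑t⁻¹) := by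
    push_cast
    linear_combination -(t : R) * s.mul_inv - (s : R) * t.mul_inv
  rw [← sub_eq_zero (b := (1 : R)), h, Units.mul_right_eq_zero]

lemma isUnit_inv_sub_one {v : Rˣ} (hv : IsUnit (v - 1 : R)) : IsUnit (↑v⁻¹ - 1 : R) := by
  have h : (↑v⁻¹ - 1 : R) = -↑v⁻¹ * (v - 1) := by linear_combination v.inv_mul
  rw [h]
  exact v⁻¹.isUnit.neg.mul hv

open scoped Classical in
lemma sum_units_one_add_mul_one_add_eq_one [Fintype Rˣ] [DecidableEq R]
    {M : Type*} [AddCommMonoid M] (f : R → R → M) :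
    ∑ p : Rˣ × Rˣ with (1 + ↑p.1 : R) * (1 + ↑p.2) = 1, f p.1 p.2 =
      ∑ v : Rˣ with IsUnit (↑v - 1 : R), f (v - 1) (↑v⁻¹ - 1) := by
  have val_inv {s t : R} (h : (1 + s) * (1 + t) = 1) :
      (↑(Units.mkOfMulEqOne _ _ h)⁻¹ : R) = 1 + t := rfl
  refine sum_bij' (fun p hp ↦ Units.mkOfMulEqOne _ _ (mem_filter.mp hp).2)
    (fun v hv ↦ ((mem_filter.mp hv).2.unit, (isUnit_inv_sub_one (mem_filter.mp hv).2).unit))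
    ?_ ?_ ?_ ?_ ?_
  · simp
  · simp
  · intro p hp
    ext <;> simp [val_inv]
  · intro v hv
    ext
    simp
  · simp +contextual [val_inv]

variable [Fintype R] [DecidableEq R] {R' : Type*} [CommRing R'] [IsDomain R']
  {ψ : AddChar R R'}

lemma sum_mul_kloostermanSum_mul_kloostermanSum_eq_sum_pairs (hψ : ψ.IsPrimitive) (a b : R) :
    ∑ z, ψ z * kloostermanSum ψ a z * kloostermanSum ψ b z =
      Fintype.card R * ∑ p : Rˣ × Rˣ with (1 + ↑p.1 : R) * (1 + ↑p.2) = 1,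
        ψ (a * p.1 + b * p.2) := by
  calc
    _ = ∑ z, ∑ p : Rˣ × Rˣ,
          ψ (a * p.1 + b * p.2) * ψ (z * (1 + ↑p.1⁻¹ + ↑p.2⁻¹)) := by
      refine sum_congr rfl fun z _ ↦ ?_
      rw [kloostermanSum, kloostermanSum, mul_assoc, Fintype.sum_mul_sum, ← Fintype.sum_prod_type',
        mul_sum]
      refine sum_congr rfl fun p _ ↦ ?_
      simp only [← AddChar.map_add_eq_mul]
      ring_nf
    _ = ∑ p : Rˣ × Rˣ, if (1 + p.1 : R) * (1 + p.2) = 1 then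
          Fintype.card R * ψ (a * p.1 + b * p.2) else 0 := by
      rw [sum_comm]
      simp only [← mul_sum, AddChar.sum_mulShift _ hψ, one_add_inv_add_inv_eq_zero_iff,
        Nat.cast_ite, Nat.cast_zero, mul_ite, mul_zero, mul_comm (Fintype.card R : R')]
    _ = _ := by rw [← sum_filter, mul_sum]

open scoped Classical in
lemma sum_mul_kloostermanSum_mul_kloostermanSum (hψ : ψ.IsPrimitive) (a b : R) :
    ∑ z, ψ z * kloostermanSum ψ a z * kloostermanSum ψ b z =
      Fintype.card R * ψ (-(a + b)) *
        ∑ v : Rˣ with IsUnit (↑v - 1 : R), ψ (a * v + b * ↑v⁻¹) := by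
  rw [sum_mul_kloostermanSum_mul_kloostermanSum_eq_sum_pairs hψ, mul_assoc,
    sum_units_one_add_mul_one_add_eq_one (fun s t ↦ ψ (a * s + b * t)), mul_sum _ _ (ψ _)]
  refine congrArg _ (sum_congr rfl fun v _ ↦ ?_)
  rw [← AddChar.map_add_eq_mul]
  ring_nf

end CommRing

section Field

variable {F : Type*} [Field F] [Fintype F] [DecidableEq F]

open scoped Classical in
lemma sum_units_isUnit_sub_one {R' : Type*} [Ring R'] (ψ : AddChar F R') (a b : F) :
    ∑ v : Fˣ with IsUnit (↑v - 1 : F), ψ (a * v + b * ↑v⁻¹) =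
      kloostermanSum ψ a b - ψ (a + b) := by
  have isUnit_iff (v : Fˣ) : IsUnit (↑v - 1 : F) ↔ v ≠ 1 := by simp [sub_eq_zero]
  simp only [isUnit_iff, filter_ne', sum_erase_eq_sub (mem_univ _), kloostermanSum]
  simp

variable {R' : Type*} [CommRing R'] [IsDomain R'] {ψ : AddChar F R'}

lemma sum_mul_kloostermanSum_mul_kloostermanSum_of_field (hψ : ψ.IsPrimitive) (a b : F) :
    ∑ z, ψ z * kloostermanSum ψ a z * kloostermanSum ψ b z =
      Fintype.card F * ψ (-(a + b)) * kloostermanSum ψ a b - Fintype.card F := by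
  have cancel : ψ (-(a + b)) * ψ (a + b) = 1 := by
    rw [← AddChar.map_add_eq_mul, neg_add_cancel, AddChar.map_zero_eq_one]
  rw [sum_mul_kloostermanSum_mul_kloostermanSum hψ, sum_units_isUnit_sub_one]
  linear_combination -(Fintype.card F : R') * cancel

theorem sum_eq_mul_kloos_sub_general (hψ : ψ.IsPrimitive) {c d₁ d₂ : F} (hc : c ≠ 0)
    (h₁ : d₁ ≠ 0) (h₂ : d₂ ≠ 0) (m n : F) :
    ∑ α, ψ (α * c) * kloostermanSum ψ m (α * d₁) * kloostermanSum ψ n (α * d₂) =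
      Fintype.card F * ψ (-(c⁻¹ * (d₁ * m + d₂ * n))) *
        kloostermanSum ψ (c⁻¹ * d₁ * m) (c⁻¹ * d₂ * n) - Fintype.card F := by
  have rescale {d : F} (hd : d ≠ 0) (m α : F) :
      kloostermanSum ψ m (α * d) = kloostermanSum ψ (c⁻¹ * d * m) (α * c) := by
    have h := kloostermanSum_units_mul_right ψ m (α * c)
      (Units.mk0 (c⁻¹ * d) (mul_ne_zero (inv_ne_zero hc) hd))
    rw [Units.val_mk0] at h
    rw [← h]
    congr 1
    field_simp
  simp only [rescale h₁, rescale h₂]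
  rw [(mulRight_bijective₀ c hc).sum_comp fun z ↦
      ψ z * kloostermanSum ψ (c⁻¹ * d₁ * m) z * kloostermanSum ψ (c⁻¹ * d₂ * n) z,
    sum_mul_kloostermanSum_mul_kloostermanSum_of_field hψ]
  ring_nf

end Field

section ZMod

variable (q : ℕ) [NeZero q]

lemma expq_eq_stdAddChar (x : ℤ) : expq q x = ZMod.stdAddChar (x : ZMod q) := by
  rw [ZMod.stdAddChar_coe, expq]

lemma kloos_eq_kloostermanSum (a b : ℤ) :
    kloos a b q = kloostermanSum ZMod.stdAddChar (a : ZMod q) b := by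
  simp [kloos, kloostermanSum, expq_eq_stdAddChar]

lemma sum_range_natCast_zmod {M : Type*} [AddCommMonoid M] (f : ZMod q → M) :
    ∑ a ∈ range q, f a = ∑ a, f a :=
  sum_nbij' (fun a ↦ a) ZMod.val (by simp) (by simp [ZMod.val_lt])
    (fun _ ha ↦ ZMod.val_cast_of_lt (mem_range.mp ha)) (by simp) (by simp)

end ZMod

/-- For a prime `q`, integers `c`, `d₁`, `d₂` coprime to `q`, and `c⁻¹` an integer
inverse of `c` modulo `q`:
`∑_{α=0}^{q−1} e_q(αc) S(1, αd₁; q) S(1, αd₂; q)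
  = q · e_q(−c⁻¹(d₁+d₂)) · S(c⁻¹d₁, c⁻¹d₂; q) − q`. -/
theorem sum_eq_mul_kloos_sub (q : ℕ) [NeZero q] (hq : q.Prime) (c d₁ d₂ cinv : ℤ)
    (hc : IsCoprime c (q : ℤ)) (h₁ : IsCoprime d₁ (q : ℤ)) (h₂ : IsCoprime d₂ (q : ℤ))
    (hcinv : (q : ℤ) ∣ (c * cinv - 1)) :
    ∑ α ∈ Finset.range q,
        expq q ((α : ℤ) * c) * kloos 1 ((α : ℤ) * d₁) q * kloos 1 ((α : ℤ) * d₂) q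
      = (q : ℂ) * expq q (-(cinv * (d₁ + d₂))) * kloos (cinv * d₁) (cinv * d₂) q
        - (q : ℂ) := by
  have : Fact q.Prime := ⟨hq⟩
  have ne_zero {z : ℤ} (hz : IsCoprime z q) : (z : ZMod q) ≠ 0 :=
    ((ZMod.coe_int_isUnit_iff_isCoprime z q).mpr hz.symm).ne_zero
  have cinv_eq : (cinv : ZMod q) = (c : ZMod q)⁻¹ := by
    have h := (ZMod.intCast_zmod_eq_zero_iff_dvd _ q).mpr hcinv
    exact eq_inv_of_mul_eq_one_right (sub_eq_zero.mp (by exact_mod_cast h))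
  have key := sum_eq_mul_kloos_sub_general (ZMod.isPrimitive_stdAddChar q)
    (ne_zero hc) (ne_zero h₁) (ne_zero h₂) 1 1
  simpa [expq_eq_stdAddChar, kloos_eq_kloostermanSum, cinv_eq, ← sum_range_natCast_zmod, mul_add]
    using key
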